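/- Existence and uniqueness of the refraction point for two points on opposite sides of an edge: Let F₁ and F₂ be Minkowski norms on ℝ², let v ∈ ℝ² be nonzero, and let a, b ∈ ℝ² be such that a and v are linearly independent and b and v are linearly independent. Then the function f(s) = F₁(a + s·v) + F₂(b − s·v) attains its global minimum over ℝ at a unique point s₀, and at this point the edge-crossing equation holds: ⟨a + s₀·v, v⟩_{a+s₀·v}^{F₁} / F₁(a + s₀·v) = ⟨b − s₀·v, v⟩_{b−s₀·v}^{F₂} / F₂(b − s₀·v). -/

import Mathlib

/-!
For a Minkowski norm `F` write `h_y(u, w) = minkHess F y u w`. Since `F²` is homogeneous of degree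
two, Euler's relation gives `h_y(y, w) = F(y) · dF_y(w)` and `h_y(y, y) = F(y)²`. Hence along an
affine line `y(s) = a + s v` missing the origin, `g(s) = F(y(s))` has derivative
`g' = h_y(y, v) / g`, and `g³ g'' = h_y(v, v) h_y(y, y) - h_y(y, v)²`. When `a` and `v` are linearly
independent this is positive by the strict Cauchy–Schwarz inequality for the positive definite form
`h_y`, so `g` is strictly convex (`IsMinkowskiNorm.strictConvexOn_line`).

Therefore `f(s) = F₁(a + s v) + F₂(b - s v)` is strictly convex and has at most one minimizer.
A minimizer exists because a Minkowski norm dominates a positive multiple of the ambient norm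
(`IsMinkowskiNorm.exists_lower_bound`), so `f` is coercive. At a minimizer `f' = 0`, and by the
formula for `g'` this is the edge-crossing equation.
-/

/-- One half of the second Fréchet derivative of `F²` at `y`, evaluated at `(u, w)`:
the fundamental bilinear form `⟨u,w⟩_y^F` associated to a Minkowski norm. -/
noncomputable def minkHess {V : Type*} [NormedAddCommGroup V] [NormedSpace ℝ V]
    (F : V → ℝ) (y u w : V) : ℝ :=
  (1 / 2) * fderiv ℝ (fun z => fderiv ℝ (fun x => F x ^ 2) z) y u w

/-- `F` is a Minkowski norm on `V`. -/
structure IsMinkowskiNorm {V : Type*} [NormedAddCommGroup V] [NormedSpace ℝ V]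
    (F : V → ℝ) : Prop where
  continuous : Continuous F
  nonneg : ∀ y : V, 0 ≤ F y
  pos : ∀ y : V, y ≠ 0 → 0 < F y
  smooth : ContDiffOn ℝ (⊤ : ℕ∞) F {(0 : V)}ᶜ
  homog : ∀ l : ℝ, 0 ≤ l → ∀ y : V, F (l • y) = l * F y
  posdef : ∀ y : V, y ≠ 0 → ∀ u : V, u ≠ 0 → 0 < minkHess F y u u

namespace IsMinkowskiNorm

variable {V : Type*} [NormedAddCommGroup V] [NormedSpace ℝ V] {F : V → ℝ}

/-! ### Euler relations -/

lemma contDiffAt (hF : IsMinkowskiNorm F) {y : V} (hy : y ≠ 0) : ContDiffAt ℝ (⊤ : ℕ∞) F y :=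
  hF.smooth.contDiffAt (isOpen_compl_singleton.mem_nhds hy)

lemma contDiffAt_sq (hF : IsMinkowskiNorm F) {y : V} (hy : y ≠ 0) :
    ContDiffAt ℝ (⊤ : ℕ∞) (fun x => F x ^ 2) y :=
  (hF.contDiffAt hy).pow 2

lemma differentiableAt (hF : IsMinkowskiNorm F) {y : V} (hy : y ≠ 0) : DifferentiableAt ℝ F y :=
  (hF.contDiffAt hy).differentiableAt (by simp)

lemma differentiableAt_fderiv_sq (hF : IsMinkowskiNorm F) {y : V} (hy : y ≠ 0) :
    DifferentiableAt ℝ (fun z => fderiv ℝ (fun x => F x ^ 2) z) y :=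
  ((hF.contDiffAt_sq hy).fderiv_right (m := 1)
    (WithTop.coe_le_coe.2 (le_top : (1 + 1 : ℕ∞) ≤ ⊤))).differentiableAt
    (by simp)

lemma fderiv_sq_apply (hF : IsMinkowskiNorm F) {y : V} (hy : y ≠ 0) (w : V) :
    fderiv ℝ (fun x => F x ^ 2) y w = 2 * F y * fderiv ℝ F y w := by
  have h := ((hF.differentiableAt hy).hasFDerivAt.pow 2).fderiv
  rw [h]
  simp

/-- Euler's relation for `F`, homogeneous of degree one. -/
lemma fderiv_self (hF : IsMinkowskiNorm F) {y : V} (hy : y ≠ 0) : fderiv ℝ F y y = F y := by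
  have hline : HasDerivAt (fun l : ℝ => l • y) y 1 := by
    simpa using (hasDerivAt_id (1 : ℝ)).smul_const y
  have hd : HasFDerivAt F (fderiv ℝ F y) ((1 : ℝ) • y) := by
    simpa using (hF.differentiableAt hy).hasFDerivAt
  have h1 : HasDerivAt (fun l : ℝ => F (l • y)) (fderiv ℝ F y y) 1 :=
    hd.comp_hasDerivAt (1 : ℝ) hline
  have h2 : HasDerivAt (fun l : ℝ => l * F y) (F y) 1 := by
    simpa using (hasDerivAt_id (1 : ℝ)).mul_const (F y)
  refine h1.unique (h2.congr_of_eventuallyEq ?_)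
  filter_upwards [lt_mem_nhds (zero_lt_one' ℝ)] with l hl using hF.homog l hl.le y

/-- The differential of `F²` is positively homogeneous of degree one. -/
lemma fderiv_sq_smul (hF : IsMinkowskiNorm F) {l : ℝ} (hl : 0 < l) (y : V) :
    fderiv ℝ (fun x => F x ^ 2) (l • y) = l • fderiv ℝ (fun x => F x ^ 2) y := by
  have h1 : (fun x => F (l • x) ^ 2) = l ^ 2 • (fun x => F x ^ 2) := by
    funext x
    simp [hF.homog l hl.le x, mul_pow]
  have h2 := fderiv_comp_smul (𝕜 := ℝ) (f := fun x => F x ^ 2) (x := y) l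
  rw [h1, fderiv_const_smul_field] at h2
  have h3 := congrArg (fun T => l⁻¹ • T) h2
  simp only [Pi.smul_apply, smul_smul] at h3
  rw [inv_mul_cancel₀ hl.ne', one_smul] at h3
  rw [← h3]
  congr 1
  field_simp

/-- Euler's relation for the differential of `F²`. -/
lemma fderiv_fderiv_sq_self (hF : IsMinkowskiNorm F) {y : V} (hy : y ≠ 0) :
    fderiv ℝ (fun z => fderiv ℝ (fun x => F x ^ 2) z) y y = fderiv ℝ (fun x => F x ^ 2) y := by
  set G : V → V →L[ℝ] ℝ := fun z => fderiv ℝ (fun x => F x ^ 2) z with hG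
  have hline : HasDerivAt (fun l : ℝ => l • y) y 1 := by
    simpa using (hasDerivAt_id (1 : ℝ)).smul_const y
  have hd : HasFDerivAt G (fderiv ℝ G y) ((1 : ℝ) • y) := by
    simpa using (hF.differentiableAt_fderiv_sq hy).hasFDerivAt
  have h1 : HasDerivAt (fun l : ℝ => G (l • y)) (fderiv ℝ G y y) 1 :=
    hd.comp_hasDerivAt (1 : ℝ) hline
  have h2 : HasDerivAt (fun l : ℝ => l • G y) (G y) 1 := by
    simpa using (hasDerivAt_id (1 : ℝ)).smul_const (G y)
  refine h1.unique (h2.congr_of_eventuallyEq ?_)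
  filter_upwards [lt_mem_nhds (zero_lt_one' ℝ)] with l hl using hF.fderiv_sq_smul hl y

lemma minkHess_self_left (hF : IsMinkowskiNorm F) {y : V} (hy : y ≠ 0) (w : V) :
    minkHess F y y w = F y * fderiv ℝ F y w := by
  rw [minkHess, hF.fderiv_fderiv_sq_self hy, hF.fderiv_sq_apply hy]
  ring

lemma minkHess_comm (hF : IsMinkowskiNorm F) {y : V} (hy : y ≠ 0) (u w : V) :
    minkHess F y u w = minkHess F y w u := by
  have h : IsSymmSndFDerivAt ℝ (fun x => F x ^ 2) y :=
    (hF.contDiffAt_sq hy).isSymmSndFDerivAt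
      (by simpa using WithTop.coe_le_coe.2 (le_top : (2 : ℕ∞) ≤ ⊤))
  unfold minkHess
  rw [show fderiv ℝ (fun z => fderiv ℝ (fun x => F x ^ 2) z) y u w = _ from h u w]

/-- The strict Cauchy–Schwarz inequality for the form at `y`, between `y` and a vector `v`
that is linearly independent of it, rewritten by the Euler relations and divided by `F y ^ 2`. -/
lemma sq_fderiv_lt_minkHess (hF : IsMinkowskiNorm F) {y v : V}
    (hyv : LinearIndependent ℝ ![y, v]) :
    (fderiv ℝ F y v) ^ 2 < minkHess F y v v := by
  have hy : y ≠ 0 := hyv.ne_zero 0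
  have hpos := hF.pos y hy
  -- `F y` times the component of `v` orthogonal to `y` for the form at `y`
  set u : V := F y • v - fderiv ℝ F y v • y with hu
  have hu0 : u ≠ 0 := by
    intro h0
    have := (LinearIndependent.pair_iff.1 hyv) (-(fderiv ℝ F y v)) (F y)
      (by rw [← h0, hu, neg_smul]; abel)
    exact hpos.ne' this.2
  have h := hF.posdef y hy u hu0
  have hyy : minkHess F y y y = F y * F y := by
    rw [hF.minkHess_self_left hy, hF.fderiv_self hy]
  have hyv' := hF.minkHess_self_left hy v
  have hvy := (hF.minkHess_comm hy v y).trans hyv'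
  have hexp : minkHess F y u u = F y ^ 2 * minkHess F y v v
      - F y * fderiv ℝ F y v * minkHess F y v y - F y * fderiv ℝ F y v * minkHess F y y v
      + (fderiv ℝ F y v) ^ 2 * minkHess F y y y := by
    simp only [minkHess, hu, map_sub, map_smul, sub_apply,
      smul_apply, smul_eq_mul]
    ring
  rw [hexp, hyy, hyv', hvy] at h
  have h' : 0 < F y ^ 2 * (minkHess F y v v - (fderiv ℝ F y v) ^ 2) := by
    convert h using 1
    ring
  exact sub_pos.1 (pos_of_mul_pos_right h' (sq_nonneg _))

/-! ### Restriction to a line -/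

lemma line_independent {a v : V} (hav : LinearIndependent ℝ ![a, v]) (s : ℝ) :
    LinearIndependent ℝ ![a + s • v, v] := by
  rw [LinearIndependent.pair_iff] at hav ⊢
  intro p q h
  have := hav p (p * s + q) (by rw [← h]; module)
  obtain ⟨hp, hq⟩ := this
  subst hp
  simpa using hq

lemma line_hasDerivAt (a v : V) (s : ℝ) : HasDerivAt (fun s : ℝ => a + s • v) v s := by
  simpa using ((hasDerivAt_id s).smul_const v).const_add a

lemma hasDerivAt_line (hF : IsMinkowskiNorm F) {a v : V} (hav : LinearIndependent ℝ ![a, v])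
    (s : ℝ) : HasDerivAt (fun s : ℝ => F (a + s • v)) (fderiv ℝ F (a + s • v) v) s :=
  (hF.differentiableAt ((line_independent hav s).ne_zero 0)).hasFDerivAt.comp_hasDerivAt s
    (line_hasDerivAt a v s)

/-- The second derivative of `F` along a line missing the origin, from `dF = d(F²) / (2F)`. -/
lemma hasDerivAt_fderiv_line (hF : IsMinkowskiNorm F) {a v : V}
    (hav : LinearIndependent ℝ ![a, v]) (s : ℝ) :
    HasDerivAt (fun s : ℝ => fderiv ℝ F (a + s • v) v)
      ((minkHess F (a + s • v) v v - (fderiv ℝ F (a + s • v) v) ^ 2) / F (a + s • v)) s := by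
  have hne : ∀ s : ℝ, a + s • v ≠ 0 := fun s => (line_independent hav s).ne_zero 0
  have hpos : ∀ s : ℝ, 0 < F (a + s • v) := fun s => hF.pos _ (hne s)
  have heq : (fun s : ℝ => fderiv ℝ F (a + s • v) v) =
      fun s : ℝ => fderiv ℝ (fun x => F x ^ 2) (a + s • v) v / (2 * F (a + s • v)) := by
    funext t
    rw [hF.fderiv_sq_apply (hne t)]
    have := (hpos t).ne'
    field_simp
  have h1 : HasDerivAt (fun s : ℝ => fderiv ℝ (fun x => F x ^ 2) (a + s • v))
      (fderiv ℝ (fun z => fderiv ℝ (fun x => F x ^ 2) z) (a + s • v) v) s :=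
    (hF.differentiableAt_fderiv_sq (hne s)).hasFDerivAt.comp_hasDerivAt s (line_hasDerivAt a v s)
  have h2 := (h1.clm_apply (hasDerivAt_const s v)).div ((hF.hasDerivAt_line hav s).const_mul 2)
    (mul_pos two_pos (hpos s)).ne'
  rw [heq]
  refine h2.congr_deriv ?_
  have := (hpos s).ne'
  simp only [hF.fderiv_sq_apply (hne s), minkHess, map_zero, mul_zero, add_zero]
  field_simp

lemma strictConvexOn_line (hF : IsMinkowskiNorm F) {a v : V} (hav : LinearIndependent ℝ ![a, v]) :
    StrictConvexOn ℝ Set.univ (fun s : ℝ => F (a + s • v)) := by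
  have hd : deriv (fun s : ℝ => F (a + s • v)) = fun s => fderiv ℝ F (a + s • v) v :=
    funext fun s => (hF.hasDerivAt_line hav s).deriv
  refine StrictMono.strictConvexOn_univ_of_deriv
    (continuous_iff_continuousAt.2 fun s => (hF.hasDerivAt_line hav s).continuousAt) ?_
  rw [hd]
  refine strictMono_of_deriv_pos fun s => ?_
  rw [(hF.hasDerivAt_fderiv_line hav s).deriv]
  have hi := line_independent hav s
  exact div_pos (sub_pos.2 (hF.sq_fderiv_lt_minkHess hi)) (hF.pos _ (hi.ne_zero 0))

/-! ### Coercivity -/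

/-- The constant is the minimum of `F` on the unit sphere. -/
lemma exists_lower_bound [FiniteDimensional ℝ V] [Nontrivial V] (hF : IsMinkowskiNorm F) :
    ∃ c : ℝ, 0 < c ∧ ∀ y : V, c * ‖y‖ ≤ F y := by
  have := FiniteDimensional.proper_real V
  obtain ⟨x, hx, hmin⟩ := (isCompact_sphere (0 : V) 1).exists_isMinOn
    (NormedSpace.sphere_nonempty.2 zero_le_one) hF.continuous.continuousOn
  have hx1 : ‖x‖ = 1 := by simpa using hx
  refine ⟨F x, hF.pos x (by rintro rfl; simp at hx1), fun y => ?_⟩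
  rcases eq_or_ne y 0 with rfl | hy
  · simpa using hF.nonneg 0
  have hn : 0 < ‖y‖ := norm_pos_iff.2 hy
  have hle : F x ≤ F (‖y‖⁻¹ • y) := hmin (by simp [norm_smul, hn.ne'])
  rw [hF.homog _ (inv_nonneg.2 hn.le)] at hle
  calc F x * ‖y‖ ≤ ‖y‖⁻¹ * F y * ‖y‖ := by gcongr
    _ = F y := by field_simp

lemma tendsto_line [FiniteDimensional ℝ V] (hF : IsMinkowskiNorm F) (a : V) {v : V} (hv : v ≠ 0) :
    Filter.Tendsto (fun s : ℝ => F (a + s • v)) (Filter.cocompact ℝ) Filter.atTop := by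
  have : Nontrivial V := ⟨v, 0, hv⟩
  obtain ⟨c, hc, hb⟩ := hF.exists_lower_bound
  have hlin : Filter.Tendsto (fun s : ℝ => c * (‖s‖ * ‖v‖ + -‖a‖)) (Filter.cocompact ℝ)
      Filter.atTop :=
    (Filter.tendsto_atTop_add_const_right _ _
      ((tendsto_norm_cocompact_atTop (E := ℝ)).atTop_mul_const (norm_pos_iff.2 hv))).const_mul_atTop
      hc
  refine Filter.tendsto_atTop_mono (fun s => ?_) hlin
  refine le_trans (mul_le_mul_of_nonneg_left ?_ hc.le) (hb _)
  have := norm_sub_le (a + s • v) a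
  rw [add_sub_cancel_left, norm_smul] at this
  linarith

end IsMinkowskiNorm

/-- Existence and uniqueness of the refraction point for two points
on opposite sides of an edge. -/
theorem refraction_point_exists_unique
    (F₁ F₂ : EuclideanSpace ℝ (Fin 2) → ℝ)
    (hF₁ : IsMinkowskiNorm F₁) (hF₂ : IsMinkowskiNorm F₂)
    (v a b : EuclideanSpace ℝ (Fin 2)) (hv : v ≠ 0)
    (hav : LinearIndependent ℝ ![a, v]) (hbv : LinearIndependent ℝ ![b, v]) :
    (∃! s₀ : ℝ, ∀ s : ℝ,
        F₁ (a + s₀ • v) + F₂ (b - s₀ • v) ≤ F₁ (a + s • v) + F₂ (b - s • v)) ∧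
      ∀ s₀ : ℝ,
        (∀ s : ℝ, F₁ (a + s₀ • v) + F₂ (b - s₀ • v) ≤ F₁ (a + s • v) + F₂ (b - s • v)) →
        minkHess F₁ (a + s₀ • v) (a + s₀ • v) v / F₁ (a + s₀ • v)
          = minkHess F₂ (b - s₀ • v) (b - s₀ • v) v / F₂ (b - s₀ • v) := by
  have hbv' : LinearIndependent ℝ ![b, -v] := by
    rw [LinearIndependent.pair_iff] at hbv ⊢
    intro p q h
    have := hbv p (-q) (by rw [← h]; module)
    simpa using this
  have hsub : ∀ s : ℝ, b - s • v = b + s • (-v) := fun s => by module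
  simp only [hsub]
  set f : ℝ → ℝ := fun s => F₁ (a + s • v) + F₂ (b + s • (-v)) with hf
  have hconv : StrictConvexOn ℝ Set.univ f :=
    (hF₁.strictConvexOn_line hav).add (hF₂.strictConvexOn_line hbv')
  have hderiv : ∀ s, HasDerivAt f
      (fderiv ℝ F₁ (a + s • v) v + fderiv ℝ F₂ (b + s • (-v)) (-v)) s :=
    fun s => (hF₁.hasDerivAt_line hav s).add (hF₂.hasDerivAt_line hbv' s)
  have hcont : Continuous f := continuous_iff_continuousAt.2 fun s => (hderiv s).continuousAt
  have hcoercive : Filter.Tendsto f (Filter.cocompact ℝ) Filter.atTop :=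
    Filter.tendsto_atTop_mono (fun s => le_add_of_nonneg_right (hF₂.nonneg _))
      (hF₁.tendsto_line a hv)
  refine ⟨?_, fun s₀ hs₀ => ?_⟩
  · obtain ⟨s₀, hs₀⟩ := hcont.exists_forall_le hcoercive
    refine ⟨s₀, hs₀, fun t ht => ?_⟩
    exact hconv.eq_of_isMinOn (fun s _ => ht s) (fun s _ => hs₀ s) trivial trivial
  · have hmin : IsLocalMin f s₀ := Filter.Eventually.of_forall hs₀
    have hcrit := hmin.hasDerivAt_eq_zero (hderiv s₀)
    have hy₁ : a + s₀ • v ≠ 0 := (IsMinkowskiNorm.line_independent hav s₀).ne_zero 0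
    have hy₂ : b + s₀ • (-v) ≠ 0 := (IsMinkowskiNorm.line_independent hbv' s₀).ne_zero 0
    rw [hF₁.minkHess_self_left hy₁, hF₂.minkHess_self_left hy₂,
      mul_div_cancel_left₀ _ (hF₁.pos _ hy₁).ne', mul_div_cancel_left₀ _ (hF₂.pos _ hy₂).ne']
    rw [map_neg] at hcrit
    linarith
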